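/- Soundness of the synchronized while rule (WhileSync): let b be a predicate on program states, C a command, and I a hyper-assertion. Define while(b){C} := ((assume b) ; C)* ; assume(λσ. ¬ b(σ)). If (i) for every set S of extended states, I(S) implies that b(φ^P) = b(φ'^P) for all φ, φ' ∈ S, and (ii) the hyper-triple ⊨ {λS. I(S) ∧ ∀φ ∈ S, b(φ^P)} C {I} is valid, then the hyper-triple ⊨ {I} while(b){C} {λS. (I(S) ∨ S = ∅) ∧ ∀φ ∈ S, ¬ b(φ^P)} is valid. -/

import Mathlib

/-- Commands of the programming language. -/
inductive Cmd (PVar PVal : Type) : Type where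
  | skip : Cmd PVar PVal
  | assign : PVar → ((PVar → PVal) → PVal) → Cmd PVar PVal
  | havoc : PVar → Cmd PVar PVal
  | assume : ((PVar → PVal) → Prop) → Cmd PVar PVal
  | seq : Cmd PVar PVal → Cmd PVar PVal → Cmd PVar PVal
  | choice : Cmd PVar PVal → Cmd PVar PVal → Cmd PVar PVal
  | iter : Cmd PVar PVal → Cmd PVar PVal

/-- Big-step semantics ⟨C, σ⟩ → σ'. -/
inductive BigStep {PVar PVal : Type} [DecidableEq PVar] :
    Cmd PVar PVal → (PVar → PVal) → (PVar → PVal) → Prop where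
  | skip (σ : PVar → PVal) : BigStep Cmd.skip σ σ
  | assign (x : PVar) (e : (PVar → PVal) → PVal) (σ : PVar → PVal) :
      BigStep (Cmd.assign x e) σ (Function.update σ x (e σ))
  | havoc (x : PVar) (σ : PVar → PVal) (v : PVal) :
      BigStep (Cmd.havoc x) σ (Function.update σ x v)
  | assume {b : (PVar → PVal) → Prop} {σ : PVar → PVal} (h : b σ) :
      BigStep (Cmd.assume b) σ σ
  | seq {C1 C2 : Cmd PVar PVal} {σ σ' σ'' : PVar → PVal} :
      BigStep C1 σ σ' → BigStep C2 σ' σ'' → BigStep (Cmd.seq C1 C2) σ σ''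
  | choiceL {C1 C2 : Cmd PVar PVal} {σ σ' : PVar → PVal} :
      BigStep C1 σ σ' → BigStep (Cmd.choice C1 C2) σ σ'
  | choiceR {C1 C2 : Cmd PVar PVal} {σ σ' : PVar → PVal} :
      BigStep C2 σ σ' → BigStep (Cmd.choice C1 C2) σ σ'
  | iterNil {C : Cmd PVar PVal} {σ : PVar → PVal} : BigStep (Cmd.iter C) σ σ
  | iterCons {C : Cmd PVar PVal} {σ σ' σ'' : PVar → PVal} :
      BigStep C σ σ' → BigStep (Cmd.iter C) σ' σ'' → BigStep (Cmd.iter C) σ σ''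

/-- Extended states: a logical state paired with a program state. -/
abbrev EState (PVar PVal LVar LVal : Type) : Type :=
  (LVar → LVal) × (PVar → PVal)

/-- Extended semantics of a command on a set of extended states. -/
def sem {PVar PVal LVar LVal : Type} [DecidableEq PVar] (C : Cmd PVar PVal)
    (S : Set (EState PVar PVal LVar LVal)) : Set (EState PVar PVal LVar LVal) :=
  { φ | ∃ σ : PVar → PVal, (φ.1, σ) ∈ S ∧ BigStep C σ φ.2 }

/-- Hyper-assertions: predicates over sets of extended states. -/
abbrev HAssn (PVar PVal LVar LVal : Type) : Type :=
  Set (EState PVar PVal LVar LVal) → Prop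

/-- Validity of a hyper-triple ⊨ {P} C {Q}. -/
def HyperTriple {PVar PVal LVar LVal : Type} [DecidableEq PVar]
    (P : HAssn PVar PVal LVar LVal) (C : Cmd PVar PVal)
    (Q : HAssn PVar PVal LVar LVal) : Prop :=
  ∀ S : Set (EState PVar PVal LVar LVal), P S → Q (sem C S)

/-- if(b){C} := ((assume b) ; C) + (assume ¬b). -/
def ifCmd {PVar PVal : Type} (b : (PVar → PVal) → Prop) (C : Cmd PVar PVal) :
    Cmd PVar PVal :=
  Cmd.choice (Cmd.seq (Cmd.assume b) C) (Cmd.assume (fun σ => ¬ b σ))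

/-- while(b){C} := ((assume b) ; C)* ; assume ¬b. -/
def whileCmd {PVar PVal : Type} (b : (PVar → PVal) → Prop) (C : Cmd PVar PVal) :
    Cmd PVar PVal :=
  Cmd.seq (Cmd.iter (Cmd.seq (Cmd.assume b) C)) (Cmd.assume (fun σ => ¬ b σ))

/-!
Unrolling the loop once splits its semantics into the states that exit at once and those that run
the body. Under the invariant all states agree on the guard, so one of the two parts is empty:
either the loop acts as the identity and the invariant survives, or the whole set passes through
the body, which re-establishes the invariant. If the guard never fails, no state exits the loop.
-/

theorem forall_or_forall_not_of_forall_iff {α : Type*} {s : Set α} {p : α → Prop}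
    (h : ∀ x ∈ s, ∀ y ∈ s, (p x ↔ p y)) : (∀ x ∈ s, p x) ∨ ∀ x ∈ s, ¬ p x := by
  by_cases hex : ∃ x ∈ s, p x
  · obtain ⟨x, hx, hpx⟩ := hex
    exact .inl fun y hy => (h x hx y hy).1 hpx
  · exact .inr fun x hx hpx => hex ⟨x, hx, hpx⟩

section Semantics

variable {PVar PVal LVar LVal : Type} [DecidableEq PVar]

theorem bigStep_iter_iff {C : Cmd PVar PVal} {σ τ : PVar → PVal} :
    BigStep (Cmd.iter C) σ τ ↔ Relation.ReflTransGen (BigStep C) σ τ := by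
  constructor
  · intro h
    generalize hD : Cmd.iter C = D at h
    induction h with
    | iterNil => exact .refl
    | iterCons hstep _ _ ih =>
      cases hD
      exact .head hstep (ih rfl)
    | _ => cases hD
  · intro h
    induction h using Relation.ReflTransGen.head_induction_on with
    | refl => exact .iterNil
    | head hstep _ ih => exact .iterCons hstep ih

theorem sem_assume (b : (PVar → PVal) → Prop) (S : Set (EState PVar PVal LVar LVal)) :
    sem (Cmd.assume b) S = {φ ∈ S | b φ.2} := by
  ext ⟨l, τ⟩
  constructor
  · rintro ⟨σ, hσ, hassume⟩
    cases hassume with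
    | assume hb => exact ⟨hσ, hb⟩
  · rintro ⟨hτ, hb⟩
    exact ⟨τ, hτ, .assume hb⟩

theorem sem_seq (C₁ C₂ : Cmd PVar PVal) (S : Set (EState PVar PVal LVar LVal)) :
    sem (Cmd.seq C₁ C₂) S = sem C₂ (sem C₁ S) := by
  ext ⟨l, τ⟩
  constructor
  · rintro ⟨σ, hσ, hseq⟩
    cases hseq with
    | @seq _ _ _ ρ _ h₁ h₂ => exact ⟨ρ, ⟨σ, hσ, h₁⟩, h₂⟩
  · rintro ⟨ρ, ⟨σ, hσ, h₁⟩, h₂⟩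
    exact ⟨σ, hσ, .seq h₁ h₂⟩

theorem sem_empty (C : Cmd PVar PVal) :
    sem C (∅ : Set (EState PVar PVal LVar LVal)) = ∅ :=
  Set.eq_empty_of_forall_notMem fun _ ⟨_, hσ, _⟩ => hσ

theorem sem_iter (C : Cmd PVar PVal) (S : Set (EState PVar PVal LVar LVal)) :
    sem (Cmd.iter C) S = ⋃ n : ℕ, (sem C)^[n] S := by
  ext ⟨l, τ⟩
  rw [Set.mem_iUnion]
  constructor
  · rintro ⟨σ, (hσ : (l, σ) ∈ S), hiter⟩
    replace hiter : Relation.ReflTransGen (BigStep C) σ τ := bigStep_iter_iff.1 hiter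
    induction hiter with
    | refl => exact ⟨0, hσ⟩
    | tail _ hstep ih =>
      obtain ⟨n, hn⟩ := ih
      refine ⟨n + 1, ?_⟩
      rw [Function.iterate_succ_apply']
      exact ⟨_, hn, hstep⟩
  · rintro ⟨n, hn⟩
    induction n generalizing S with
    | zero => exact ⟨τ, hn, .iterNil⟩
    | succ n ih =>
      obtain ⟨ρ, ⟨σ, hσ, hstep⟩, hiter⟩ := ih (sem C S) hn
      exact ⟨σ, hσ, .iterCons hstep hiter⟩

theorem sem_iter_eq_union (C : Cmd PVar PVal) (S : Set (EState PVar PVal LVar LVal)) :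
    sem (Cmd.iter C) S = S ∪ sem (Cmd.iter C) (sem C S) := by
  rw [sem_iter, sem_iter]
  exact (Set.union_iUnion_nat_succ fun n => (sem C)^[n] S).symm

theorem sem_whileCmd (b : (PVar → PVal) → Prop) (C : Cmd PVar PVal)
    (S : Set (EState PVar PVal LVar LVal)) :
    sem (whileCmd b C) S =
      {φ ∈ ⋃ n : ℕ, (sem (Cmd.seq (Cmd.assume b) C))^[n] S | ¬ b φ.2} := by
  rw [whileCmd, sem_seq, sem_assume, sem_iter]

theorem sem_whileCmd_eq_union (b : (PVar → PVal) → Prop) (C : Cmd PVar PVal)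
    (S : Set (EState PVar PVal LVar LVal)) :
    sem (whileCmd b C) S =
      {φ ∈ S | ¬ b φ.2} ∪ sem (whileCmd b C) (sem C {φ ∈ S | b φ.2}) := by
  simp only [whileCmd, sem_seq _ (Cmd.assume fun σ => ¬ b σ), sem_assume]
  rw [sem_iter_eq_union, sem_seq, sem_assume]
  exact Set.sep_union

end Semantics

section While

variable {PVar PVal LVar LVal : Type} [DecidableEq PVar] {b : (PVar → PVal) → Prop}
  {S : Set (EState PVar PVal LVar LVal)}

theorem sem_whileCmd_of_forall_not (C : Cmd PVar PVal) (hb : ∀ φ ∈ S, ¬ b φ.2) :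
    sem (whileCmd b C) S = S := by
  rw [sem_whileCmd_eq_union, Set.sep_eq_self_iff_mem_true.2 hb,
    Set.sep_eq_empty_iff_mem_false.2 hb, sem_empty, sem_empty, Set.union_empty]

theorem sem_whileCmd_of_forall (C : Cmd PVar PVal) (hb : ∀ φ ∈ S, b φ.2) :
    sem (whileCmd b C) S = sem (whileCmd b C) (sem C S) := by
  rw [sem_whileCmd_eq_union, Set.sep_eq_self_iff_mem_true.2 hb,
    Set.sep_eq_empty_iff_mem_false.2 fun φ hφ => not_not_intro (hb φ hφ), Set.empty_union]

theorem not_guard_of_mem_sem_whileCmd {C : Cmd PVar PVal} {φ : EState PVar PVal LVar LVal}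
    (hφ : φ ∈ sem (whileCmd b C) S) : ¬ b φ.2 := by
  rw [sem_whileCmd] at hφ
  exact hφ.2

theorem sem_whileCmd_eq_empty_of_forall_iterate {C : Cmd PVar PVal}
    (hb : ∀ n : ℕ, ∀ φ ∈ (sem (Cmd.seq (Cmd.assume b) C))^[n] S, b φ.2) :
    sem (whileCmd b C) S = ∅ := by
  rw [sem_whileCmd, Set.sep_eq_empty_iff_mem_false]
  intro φ hφ
  obtain ⟨n, hn⟩ := Set.mem_iUnion.1 hφ
  exact not_not_intro (hb n φ hn)

theorem invariant_sem_whileCmd_or_forall_iterate {C : Cmd PVar PVal}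
    {I : HAssn PVar PVal LVar LVal}
    (hsync : ∀ S, I S → (∀ φ ∈ S, b φ.2) ∨ ∀ φ ∈ S, ¬ b φ.2)
    (hbody : HyperTriple (fun S => I S ∧ ∀ φ ∈ S, b φ.2) C I) (hI : I S) (n : ℕ) :
    I (sem (whileCmd b C) S) ∨
      ∀ φ ∈ (sem (Cmd.seq (Cmd.assume b) C))^[n] S, b φ.2 := by
  induction n generalizing S with
  | zero =>
    refine (hsync S hI).symm.imp_left fun hfalse => ?_
    rwa [sem_whileCmd_of_forall_not C hfalse]
  | succ n ih =>
    rcases hsync S hI with htrue | hfalse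
    · have hguarded : sem (Cmd.seq (Cmd.assume b) C) S = sem C S := by
        rw [sem_seq, sem_assume, Set.sep_eq_self_iff_mem_true.2 htrue]
      rw [sem_whileCmd_of_forall C htrue, Function.iterate_succ_apply, hguarded]
      exact ih (hbody S ⟨hI, htrue⟩)
    · left
      rwa [sem_whileCmd_of_forall_not C hfalse]

end While

/-- Soundness of the synchronized while rule (WhileSync). -/
theorem whileSync_sound {PVar PVal LVar LVal : Type} [DecidableEq PVar]
    (b : (PVar → PVal) → Prop) (C : Cmd PVar PVal)
    (I : HAssn PVar PVal LVar LVal)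
    (hlow : ∀ S : Set (EState PVar PVal LVar LVal),
      I S → ∀ φ ∈ S, ∀ φ' ∈ S, (b φ.2 ↔ b φ'.2))
    (hbody : HyperTriple (fun S => I S ∧ ∀ φ ∈ S, b φ.2) C I) :
    HyperTriple I (whileCmd b C)
      (fun S => (I S ∨ S = ∅) ∧ ∀ φ ∈ S, ¬ b φ.2) := by
  intro S hI
  have hsync (T : Set (EState PVar PVal LVar LVal)) (hT : I T) :
      (∀ φ ∈ T, b φ.2) ∨ ∀ φ ∈ T, ¬ b φ.2 :=
    forall_or_forall_not_of_forall_iff (s := T) (p := fun φ => b φ.2) (hlow T hT)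
  have hI_or_guard := invariant_sem_whileCmd_or_forall_iterate hsync hbody hI
  refine ⟨?_, fun φ => not_guard_of_mem_sem_whileCmd⟩
  exact (forall_or_left.1 hI_or_guard).imp_right sem_whileCmd_eq_empty_of_forall_iterate
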